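/- arXiv:math/0006004 — 2 statements merged into one kernel-verified Lean document; each statement's English description precedes it below -/
import Mathlib

section
/- Basis property: assume axiom (C0): there exists a regular dominant ρ' ∈ V₀ such that for every λ ∈ Λ₊ there is a unique p ∈ P^W of degree ℓ(λ) with p(ρ'+μ) = δ_{λμ} for all μ ∈ Λ₊ with ℓ(μ) ≤ ℓ(λ). Let ρ ∈ V₀ be dominant. Then for every d ∈ ℕ, the family {p_λ : λ ∈ Λ₊, ℓ(λ) ≤ d} is a ℂ-basis of the space {p ∈ P^W : deg p ≤ d}. -/
/-
Common framework for F. Knop, "Construction of Commuting Difference Operators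
for Multiplicity Free Spaces".

We identify `Γ` with `ι → ℤ` via its basis `Σ` (so `Σ` is the standard basis),
`Γ^∨` with `ι → ℤ` via the dual basis `Σ^∨`, and `V = Hom(Γ, ℂ)` with `ι → ℂ`.
-/

open scoped BigOperators Classical
open MvPolynomial

noncomputable section

namespace Knop

variable {ι : Type*} [Fintype ι] [DecidableEq ι]

/-- The `i`-th element of the basis `Σ` of `Γ` (resp. of `Σ^∨ ⊆ Γ^∨`), in coordinates. -/
def e (i : ι) : ι → ℤ := Pi.single i 1

/-- The pairing between `Γ` and `Γ^∨` (in coordinates, the dot product);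
`pairZ γ η = γ(η) = η(γ)`. -/
def pairZ (γ η : ι → ℤ) : ℤ := ∑ i, γ i * η i

/-- Evaluation of `γ ∈ Γ` as a linear function on `V = Hom(Γ,ℂ) ≅ ι → ℂ`. -/
def evalC (γ : ι → ℤ) (z : ι → ℂ) : ℂ := ∑ i, (γ i : ℂ) * z i

/-- The embedding `Γ^∨ ⊆ V`. -/
def toV (η : ι → ℤ) : ι → ℂ := fun i => (η i : ℂ)

/-- The action of `w ∈ Aut(Γ)` on `V = Hom(Γ, ℂ)`: `(w • z)(γ) = z(w⁻¹ γ)`, in coordinates. -/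
def actV (w : (ι → ℤ) ≃ₗ[ℤ] (ι → ℤ)) (z : ι → ℂ) : ι → ℂ :=
  fun i => evalC (w.symm (e i)) z

/-- The action of `w ∈ Aut(Γ)` on `Γ^∨ = Hom(Γ, ℤ)`: `(w • η)(γ) = η(w⁻¹ γ)`. -/
def actDual (w : (ι → ℤ) ≃ₗ[ℤ] (ι → ℤ)) (η : ι → ℤ) : ι → ℤ :=
  fun i => pairZ (w.symm (e i)) η

/-- `Λ₊`, the `ℕ`-span of `Σ^∨` inside `Γ^∨`. -/
def LamPlus : Set (ι → ℤ) := {η | ∀ i, 0 ≤ η i}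

/-- The reflection `s_α(x) = x - α^∨(x)·α` attached to a root `α` with coroot `αv`. -/
def reflMap (α αv : ι → ℤ) : (ι → ℤ) → (ι → ℤ) := fun x => x - pairZ x αv • α

/-- The data `(Γ, Σ, W, ℓ)` together with the axioms C1–C8 of Knop's paper
(in the coordinates given by `Σ`).  The root system `Δ` of `W`, the set
`Φ = W·Σ`, and `Λ₁ = W·Σ^∨₁` are carried along as `Finset`s with their
defining specifications. -/
structure Data (ι : Type*) [Fintype ι] [DecidableEq ι] where
  /-- the reflection group `W ⊆ Aut(Γ)` -/
  W : Subgroup ((ι → ℤ) ≃ₗ[ℤ] (ι → ℤ))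
  /-- `W` is finite -/
  W_finite : (W : Set ((ι → ℤ) ≃ₗ[ℤ] (ι → ℤ))).Finite
  /-- the element `ℓ ∈ Γ` -/
  ell : ι → ℤ
  /-- the set of roots `Δ ⊆ Γ` of `W` -/
  Δ : Finset (ι → ℤ)
  /-- the coroot `α^∨ ∈ Γ^∨` of a root `α` -/
  coroot : (ι → ℤ) → (ι → ℤ)
  /-- `Φ = W·Σ` -/
  Φ : Finset (ι → ℤ)
  /-- `Λ₁ = W·Σ^∨₁` -/
  Λ₁ : Finset (ι → ℤ)
  Φ_spec : ∀ ω, ω ∈ Φ ↔ ∃ w ∈ W, ∃ i, ω = w (e i)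
  Λ₁_spec : ∀ η, η ∈ Λ₁ ↔ ∃ w ∈ W, ∃ i, ell i = 1 ∧ η = actDual w (e i)
  /-- `Δ = -Δ` -/
  Δ_neg : ∀ α ∈ Δ, -α ∈ Δ
  /-- every root is a primitive vector of `Γ` -/
  Δ_prim : ∀ α ∈ Δ, ∀ (n : ℤ) (β : ι → ℤ), α = n • β → IsUnit n
  /-- the reflection `s_α` belongs to `W` -/
  refl_mem : ∀ α ∈ Δ, ∃ w ∈ W, ∀ x, w x = reflMap α (coroot α) x
  /-- `α^∨(α) = 2` -/
  coroot_pair : ∀ α ∈ Δ, pairZ α (coroot α) = 2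
  /-- C1: `W` is generated by the reflections `s_α`, `α ∈ Δ` -/
  C1 : W ≤ Subgroup.closure {w : (ι → ℤ) ≃ₗ[ℤ] (ι → ℤ) |
        ∃ α ∈ Δ, ∀ x, w x = reflMap α (coroot α) x}
  /-- C2: `Δ = Δ⁺ ∪ (-Δ⁺)` -/
  C2 : ∀ α ∈ Δ, (∀ i, 0 ≤ α i) ∨ (∀ i, α i ≤ 0)
  /-- C3: `Φ ⊆ Φ⁺ ∪ (-Φ⁺)` -/
  C3 : ∀ ω ∈ Φ, (∀ i, 0 ≤ ω i) ∨ (∀ i, ω i ≤ 0)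
  /-- C4: `ℓ ∈ Γ^W` -/
  C4 : ∀ w ∈ W, w ell = ell
  /-- C5: `Σ_{ω ∈ Φ⁺} ω - Σ_{α ∈ Δ⁺} α = ℓ` -/
  C5 : (∑ ω ∈ Φ.filter (fun ω => ∀ i, 0 ≤ ω i), ω)
        - (∑ α ∈ Δ.filter (fun α => ∀ i, 0 ≤ α i), α) = ell
  /-- C6: `ℓ(η) > 0` for all `η ∈ Σ^∨` -/
  C6 : ∀ i, 0 < ell i
  /-- C7: `ω(η) ∈ {-1,0,1}` for `η ∈ Σ^∨₁` and `ω ∈ Δ ∪ Φ` -/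
  C7 : ∀ i, ell i = 1 → ∀ ω, (ω ∈ Δ ∨ ω ∈ Φ) → ω i = -1 ∨ ω i = 0 ∨ ω i = 1
  /-- C8: a `W`-invariant linear function on `V` is determined by its restriction to `Σ^∨₁` -/
  C8 : ∀ c c' : ι → ℂ,
    (∀ w ∈ W, ∀ z : ι → ℂ, ∑ i, c i * actV w z i = ∑ i, c i * z i) →
    (∀ w ∈ W, ∀ z : ι → ℂ, ∑ i, c' i * actV w z i = ∑ i, c' i * z i) →
    (∀ i, ell i = 1 → c i = c' i) → c = c'

namespace Data

variable (D : Data ι)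

/-- `Δ⁺`, the positive roots. -/
def Δpos : Finset (ι → ℤ) := D.Δ.filter fun α => ∀ i, 0 ≤ α i

/-- `Φ⁺`. -/
def Φpos : Finset (ι → ℤ) := D.Φ.filter fun ω => ∀ i, 0 ≤ ω i

/-- The submonoid `Λ` of `Γ^∨` generated by `Λ₁`. -/
def Lam : AddSubmonoid (ι → ℤ) := AddSubmonoid.closure (D.Λ₁ : Set (ι → ℤ))

/-- `ρ ∈ V₀`: `ω₁(ρ) = ω₂(ρ)` whenever `ω₁, ω₂ ∈ Σ` lie in the same `±W`-orbit. -/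
def InV0 (ρ : ι → ℂ) : Prop :=
  ∀ i j : ι, (∃ w ∈ D.W, e i = w (e j) ∨ e i = -(w (e j))) → ρ i = ρ j

/-- `k` is the multiplicity-parameter function of `ρ ∈ V₀`:
`k_ω = ω₁(ρ)` for any `ω₁ ∈ (±W)·ω ∩ Σ`. -/
def IsK (ρ : ι → ℂ) (k : (ι → ℤ) → ℂ) : Prop :=
  ∀ (ω : ι → ℤ) (i : ι), (∃ w ∈ D.W, e i = w ω ∨ e i = -(w ω)) → k ω = ρ i

/-- `ρ` is dominant: `α(ρ) ∉ {-1,-2,…}` for all `α ∈ Δ⁺`. -/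
def Dominant (ρ : ι → ℂ) : Prop :=
  ∀ α ∈ D.Δpos, ∀ n : ℕ, evalC α ρ ≠ -((n : ℂ) + 1)

/-- `ρ` is regular: `α(ρ) ≠ 0` for all `α ∈ Δ⁺`. -/
def Regular (ρ : ι → ℂ) : Prop :=
  ∀ α ∈ D.Δpos, evalC α ρ ≠ 0

/-- `ρ` is non-integral: `α(ρ) ∉ ℤ` for all `α ∈ Δ`. -/
def NonIntegral (ρ : ι → ℂ) : Prop :=
  ∀ α ∈ D.Δ, ∀ n : ℤ, evalC α ρ ≠ (n : ℂ)

/-- `ρ` is strongly dominant (`k` being the parameter function of `ρ`). -/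
def StronglyDominant (ρ : ι → ℂ) (k : (ι → ℤ) → ℂ) : Prop :=
  D.Regular ρ ∧ D.Dominant ρ ∧
    ∀ ω ∈ D.Φpos, (∀ n : ℕ, evalC ω ρ - k ω ≠ -((n : ℂ) + 1)) ∧
      (∀ n : ℕ, evalC ω ρ + k ω ≠ -(n : ℂ))

/-- The rational function `f_η`, `η ∈ Λ₁`. -/
def f (k : (ι → ℤ) → ℂ) (η : ι → ℤ) (z : ι → ℂ) : ℂ :=
  (∏ ω ∈ D.Φ.filter (fun ω => 0 < pairZ ω η), (evalC ω z - k ω)) /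
  (∏ α ∈ D.Δ.filter (fun α => 0 < pairZ α η), evalC α z)

/-- The value at `z` of `L(p) = Σ_{η ∈ Λ₁} f_η T_η (p)`. -/
def Lval (k : (ι → ℤ) → ℂ) (p : MvPolynomial ι ℂ) (z : ι → ℂ) : ℂ :=
  ∑ η ∈ D.Λ₁, D.f k η z * eval (z - toV η) p

/-- `W`-invariance of a polynomial function on `V`. -/
def WInv (p : MvPolynomial ι ℂ) : Prop :=
  ∀ w ∈ D.W, ∀ z : ι → ℂ, eval (actV w z) p = eval z p

/-- The defining property of the Capelli polynomial `p_λ` (with shift `ρ`):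
`p` is `W`-invariant of degree `≤ ℓ(λ)` and `p(ρ+μ) = δ_{λμ}` for all
`μ ∈ Λ₊` with `ℓ(μ) ≤ ℓ(λ)`. -/
def CapelliAt (ρ : ι → ℂ) (lam : ι → ℤ) (p : MvPolynomial ι ℂ) : Prop :=
  D.WInv p ∧ (p.totalDegree : ℤ) ≤ pairZ D.ell lam ∧
    ∀ μ : ι → ℤ, μ ∈ LamPlus → pairZ D.ell μ ≤ pairZ D.ell lam →
      eval (ρ + toV μ) p = if μ = lam then 1 else 0

/-- Axiom C0: for some regular dominant `ρ' ∈ V₀` and every `λ ∈ Λ₊` there is a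
unique `W`-invariant polynomial of degree `ℓ(λ)` with `p(ρ'+μ) = δ_{λμ}` for all
`μ ∈ Λ₊` with `ℓ(μ) ≤ ℓ(λ)`. -/
def C0 : Prop :=
  ∃ ρ' : ι → ℂ, D.InV0 ρ' ∧ D.Regular ρ' ∧ D.Dominant ρ' ∧
    ∀ lam : ι → ℤ, lam ∈ LamPlus →
      ∃! p : MvPolynomial ι ℂ, D.WInv p ∧
        p.totalDegree = (pairZ D.ell lam).toNat ∧
        ∀ μ : ι → ℤ, μ ∈ LamPlus → pairZ D.ell μ ≤ pairZ D.ell lam →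
          eval (ρ' + toV μ) p = if μ = lam then 1 else 0

end Data

/-- The `m`-th point `τ_m` of the path starting at `lam` with step sequence `s`
(steps are meant to lie in `Λ₁`). -/
def pathPt (lam : ι → ℤ) {d : ℕ} (s : Fin d → ι → ℤ) (m : ℕ) : ι → ℤ :=
  lam + ∑ i ∈ Finset.univ.filter (fun i : Fin d => (i : ℕ) < m), s i

/-- All paths of length `d` from `lam` to `mu` (with steps in `Λ₁`), encoded by
their step sequences. -/
def paths (D : Data ι) (lam mu : ι → ℤ) (d : ℕ) : Finset (Fin d → ι → ℤ) :=
  (Fintype.piFinset fun _ : Fin d => D.Λ₁).filter fun s => pathPt lam s d = mu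

/-- All positive paths of length `d` from `lam` to `mu`. -/
def posPaths (D : Data ι) (lam mu : ι → ℤ) (d : ℕ) : Finset (Fin d → ι → ℤ) :=
  (Fintype.piFinset fun _ : Fin d => D.Λ₁).filter fun s =>
    (∀ m ≤ d, pathPt lam s m ∈ LamPlus) ∧ pathPt lam s d = mu

/-- The falling factorial `[x ↓ d] = x(x-1)⋯(x-d+1)`. -/
def ffall (x : ℂ) (d : ℤ) : ℂ := ∏ j ∈ Finset.range d.toNat, (x - (j : ℂ))

namespace Data

variable (D : Data ι)

/-- The generalized rational function `f_τ`, `τ ∈ Λ` (formula (Def-f-l)). -/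
def fgen (k : (ι → ℤ) → ℂ) (τ : ι → ℤ) (z : ι → ℂ) : ℂ :=
  (∏ ω ∈ D.Φ.filter (fun ω => 0 < pairZ ω τ), ffall (evalC ω z - k ω) (pairZ ω τ)) /
  (∏ α ∈ D.Δ.filter (fun α => 0 < pairZ α τ), ffall (evalC α z) (pairZ α τ))

/-- The virtual dimension `d_λ = (-1)^{ℓ(λ)} f_λ(-ρ) / f_λ(ρ+λ)`. -/
def vdim (k : (ι → ℤ) → ℂ) (ρ : ι → ℂ) (lam : ι → ℤ) : ℂ :=
  (-1 : ℂ) ^ (pairZ D.ell lam) * D.fgen k lam (-ρ) / D.fgen k lam (ρ + toV lam)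

/-- The rational function `b_τ^h` (formula (Def-b-t)); here the sum runs over
all paths from `0` to `τ` of length `d = ℓ(τ)`. -/
def bfun (k : (ι → ℤ) → ℂ) (h : MvPolynomial ι ℂ) (τ : ι → ℤ) (z : ι → ℂ) : ℂ :=
  ∑ s ∈ paths D 0 τ (pairZ D.ell τ).toNat,
    (∑ i ∈ Finset.range ((pairZ D.ell τ).toNat + 1),
      ((-1 : ℂ) ^ ((pairZ D.ell τ).toNat - i) /
        ((Nat.factorial i : ℂ) * (Nat.factorial ((pairZ D.ell τ).toNat - i) : ℂ))) *
        eval (z - toV (pathPt 0 s i)) h) *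
    ∏ i : Fin (pairZ D.ell τ).toNat, D.fgen k (s i) (z - toV (pathPt 0 s (i : ℕ)))

/-- The difference operator `D_h = Σ_{τ ∈ Λ} b_τ^h T_τ`, acting on functions on `V`. -/
def Dop (k : (ι → ℤ) → ℂ) (h : MvPolynomial ι ℂ) (F : (ι → ℂ) → ℂ) (z : ι → ℂ) : ℂ :=
  ∑ᶠ τ ∈ (D.Lam : Set (ι → ℤ)), D.bfun k h τ z * F (z - toV τ)

/-- The order relation on `Λ`: `τ₁ ≤ τ₂` iff `ℓ(τ₁) < ℓ(τ₂)`, or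
`ℓ(τ₁) = ℓ(τ₂)` and `τ₂ - τ₁` is a sum of positive coroots. -/
def ordLe (τ₁ τ₂ : ι → ℤ) : Prop :=
  pairZ D.ell τ₁ < pairZ D.ell τ₂ ∨
    (pairZ D.ell τ₁ = pairZ D.ell τ₂ ∧
      τ₂ - τ₁ ∈ AddSubmonoid.closure (D.coroot '' (D.Δpos : Set (ι → ℤ))))

end Data


/-- `ℓ` is `W`-invariant as a linear function on `V`. -/
theorem ell_inv_aux (D : Data ι) (w : (ι → ℤ) ≃ₗ[ℤ] (ι → ℤ)) (hw : w ∈ D.W) (z : ι → ℂ) :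
    ∑ i, (D.ell i : ℂ) * actV w z i = ∑ i, (D.ell i : ℂ) * z i := by
  have h1 : w.symm D.ell = D.ell := by
    rw [LinearEquiv.symm_apply_eq]; exact (D.C4 w hw).symm
  have h2 : ∀ j, D.ell j = ∑ i, D.ell i * w.symm (e i) j := by
    intro j
    have h3 : D.ell = ∑ i, D.ell i • (e i : ι → ℤ) := by
      ext k
      simp [e, Finset.sum_apply, Pi.single_apply]
    have h4 := congrFun h1 j
    rw [h3, map_sum] at h4
    simp only [map_smul, Finset.sum_apply, Pi.smul_apply, smul_eq_mul] at h4
    rw [h4]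
    simpa only [Finset.sum_apply, Pi.smul_apply, smul_eq_mul] using congrFun h3 j
  simp only [actV, evalC, Finset.mul_sum]
  rw [Finset.sum_comm]
  refine Finset.sum_congr rfl fun j _ => ?_
  conv_rhs => rw [h2 j]
  push_cast
  rw [Finset.sum_mul]
  exact Finset.sum_congr rfl fun i _ => by ring

theorem exists_ell_one (D : Data ι) [Nonempty ι] : ∃ i, D.ell i = 1 := by
  by_contra! h
  have := D.C8 (fun i => (D.ell i : ℂ)) (fun _ => 0) (fun w hw z => ell_inv_aux D w hw z)
    (by simp) (fun i hi => absurd hi (h i))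
  obtain ⟨i⟩ := ‹Nonempty ι›
  have h2 := congrFun this i
  have h3 := D.C6 i
  simp at h2
  omega

theorem exists_lam (D : Data ι) (q : MvPolynomial ι ℂ) (d : ℕ) (hq : q.totalDegree ≤ d) :
    ∃ lam : ι → ℤ, lam ∈ LamPlus ∧ (q.totalDegree : ℤ) ≤ pairZ D.ell lam ∧
      pairZ D.ell lam ≤ (d : ℤ) := by
  rcases isEmpty_or_nonempty ι with hE | hN
  · refine ⟨0, fun i => le_rfl, ?_, by simp [pairZ]⟩
    have : q.totalDegree = 0 := by
      rw [MvPolynomial.eq_C_of_isEmpty q, totalDegree_C]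
    simp [this, pairZ]
  · obtain ⟨i, hi⟩ := exists_ell_one D
    have : pairZ D.ell (Pi.single i (d : ℤ)) = d := by
      simp [pairZ, Pi.single_apply, hi]
    refine ⟨Pi.single i (d : ℤ), ?_, ?_, ?_⟩
    · intro j
      by_cases h : j = i
      · subst h; simp
      · simp [h]
    · rw [this]; exact_mod_cast hq
    · rw [this]

theorem WInv.add {D : Data ι} {p q : MvPolynomial ι ℂ} (hp : D.WInv p) (hq : D.WInv q) :
    D.WInv (p + q) := fun w hw z => by rw [map_add, map_add, hp w hw z, hq w hw z]

theorem WInv.smul {D : Data ι} {p : MvPolynomial ι ℂ} (c : ℂ) (hp : D.WInv p) :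
    D.WInv (c • p) := fun w hw z => by rw [smul_eval, smul_eval, hp w hw z]

/-- the space of invariants of degree at most `d` -/
def invSpace (D : Data ι) (d : ℕ) : Submodule ℂ (MvPolynomial ι ℂ) where
  carrier := {p | D.WInv p ∧ p.totalDegree ≤ d}
  add_mem' := fun {a b} ha hb =>
    ⟨WInv.add ha.1 hb.1, (totalDegree_add a b).trans (max_le ha.2 hb.2)⟩
  zero_mem' := ⟨fun w _ z => by simp, by simp⟩
  smul_mem' := fun c a ha => ⟨WInv.smul c ha.1, (totalDegree_smul_le c a).trans ha.2⟩

theorem vanish_zero (D : Data ι) (ρ' : ι → ℂ)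
    (h : ∀ lam : ι → ℤ, lam ∈ LamPlus →
      ∃! p : MvPolynomial ι ℂ, D.WInv p ∧
        p.totalDegree = (pairZ D.ell lam).toNat ∧
        ∀ μ : ι → ℤ, μ ∈ LamPlus → pairZ D.ell μ ≤ pairZ D.ell lam →
          eval (ρ' + toV μ) p = if μ = lam then 1 else 0)
    (d : ℕ) (q : MvPolynomial ι ℂ) (hq : D.WInv q) (hd : q.totalDegree ≤ d)
    (hv : ∀ μ : ι → ℤ, μ ∈ LamPlus → pairZ D.ell μ ≤ d → eval (ρ' + toV μ) q = 0) :
    q = 0 := by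
  obtain ⟨lam, hlam, h1, h2⟩ := exists_lam D q d hd
  obtain ⟨p, ⟨hp1, hp2, hp3⟩, huniq⟩ := h lam hlam
  set N := (pairZ D.ell lam).toNat with hN
  have hqN : q.totalDegree ≤ N := by omega
  have key : ∀ c : ℂ, (p + c • q).totalDegree = N → c • q = 0 := by
    intro c hc
    have := huniq (p + c • q) ⟨WInv.add hp1 (WInv.smul c hq), hc, fun μ hμ hle => by
      rw [map_add, smul_eval, hv μ hμ (hle.trans h2), mul_zero, add_zero, hp3 μ hμ hle]⟩
    simpa using this
  have hle : ∀ c : ℂ, (p + c • q).totalDegree ≤ N := fun c =>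
    (totalDegree_add _ _).trans (max_le hp2.le ((totalDegree_smul_le c q).trans hqN))
  by_cases ha : (p + (1 : ℂ) • q).totalDegree = N
  · simpa using key 1 ha
  by_cases hb : (p + (2 : ℂ) • q).totalDegree = N
  · simpa using key 2 hb
  exfalso
  have ha' := lt_of_le_of_ne (hle 1) ha
  have hb' := lt_of_le_of_ne (hle 2) hb
  have hpe : p = (2 : ℂ) • (p + (1 : ℂ) • q) - (p + (2 : ℂ) • q) := by
    module
  have := totalDegree_sub ((2 : ℂ) • (p + (1 : ℂ) • q)) (p + (2 : ℂ) • q)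
  rw [← hpe, hp2] at this
  have h5 := totalDegree_smul_le (2 : ℂ) (p + (1 : ℂ) • q)
  have := this.trans (max_le_max h5 le_rfl)
  omega

theorem finite_S (D : Data ι) (d : ℕ) :
    Finite {lam : ι → ℤ // lam ∈ LamPlus ∧ pairZ D.ell lam ≤ (d : ℤ)} := by
  refine Set.Finite.subset (Set.finite_Icc (0 : ι → ℤ) (fun _ => (d : ℤ))) ?_
  rintro lam ⟨h1, h2⟩
  refine ⟨fun i => h1 i, fun i => le_trans ?_ h2⟩
  have h3 : D.ell i * lam i ≤ pairZ D.ell lam :=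
    Finset.single_le_sum (f := fun i => D.ell i * lam i)
      (fun j _ => mul_nonneg (D.C6 j).le (h1 j)) (Finset.mem_univ i)
  have h4 : 1 * lam i ≤ D.ell i * lam i := mul_le_mul_of_nonneg_right (D.C6 i) (h1 i)
  linarith

/-- Theorem 2.6 b: assuming axiom C0, for dominant `ρ ∈ V₀` and
every `d ∈ ℕ` the family `{p_λ : λ ∈ Λ₊, ℓ(λ) ≤ d}` is a basis of
`{p ∈ P^W : deg p ≤ d}`: it is linearly independent and spans that space. -/
theorem statement5 (D : Data ι) (hC0 : D.C0)
    (ρ : ι → ℂ) (hρ : D.InV0 ρ) (hdom : D.Dominant ρ)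
    (pl : (ι → ℤ) → MvPolynomial ι ℂ)
    (hpl : ∀ lam : ι → ℤ, lam ∈ LamPlus → D.CapelliAt ρ lam (pl lam))
    (d : ℕ) :
    LinearIndependent ℂ
      (fun x : {lam : ι → ℤ // lam ∈ LamPlus ∧ pairZ D.ell lam ≤ (d : ℤ)} => pl x.1) ∧
    ∀ p : MvPolynomial ι ℂ, D.WInv p → p.totalDegree ≤ d →
      p ∈ Submodule.span ℂ
        (pl '' {lam : ι → ℤ | lam ∈ LamPlus ∧ pairZ D.ell lam ≤ (d : ℤ)}) := by
  haveI := finite_S D d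
  haveI := Fintype.ofFinite {lam : ι → ℤ // lam ∈ LamPlus ∧ pairZ D.ell lam ≤ (d : ℤ)}
  have hLI : LinearIndependent ℂ
      (fun x : {lam : ι → ℤ // lam ∈ LamPlus ∧ pairZ D.ell lam ≤ (d : ℤ)} => pl x.1) := by
    rw [Fintype.linearIndependent_iff]
    intro g hg
    by_contra! hne
    obtain ⟨x, hx, hmin⟩ := Finset.exists_min_image
      (Finset.univ.filter fun x => g x ≠ 0) (fun x => pairZ D.ell x.1)
      (by obtain ⟨i, hi⟩ := hne; exact ⟨i, by simpa using hi⟩)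
    have hx0 : g x ≠ 0 := by simpa using hx
    apply hx0
    have h1 := congrArg (eval (ρ + toV x.1)) hg
    rw [map_sum, map_zero, Finset.sum_eq_single x] at h1
    · rw [smul_eval, (hpl x.1 x.2.1).2.2 x.1 x.2.1 le_rfl] at h1
      simpa using h1
    · intro y _ hy
      rw [smul_eval]
      by_cases hgy : g y = 0
      · rw [hgy, zero_mul]
      · rw [(hpl y.1 y.2.1).2.2 x.1 x.2.1 (hmin y (by simpa using hgy)), if_neg, mul_zero]
        exact fun h => hy (Subtype.ext h.symm)
    · simp
  refine ⟨hLI, fun p hp hpd => ?_⟩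
  obtain ⟨ρ', -, -, -, hC⟩ := hC0
  let S := {lam : ι → ℤ // lam ∈ LamPlus ∧ pairZ D.ell lam ≤ (d : ℤ)}
  let ev : invSpace D d →ₗ[ℂ] (S → ℂ) :=
    { toFun := fun q x => eval (ρ' + toV x.1) q.1
      map_add' := fun a b => by ext x; simp
      map_smul' := fun c a => by ext x; simp [smul_eval] }
  have hinj : Function.Injective ev := by
    rw [injective_iff_map_eq_zero]
    intro q hq
    apply Subtype.ext
    exact vanish_zero D ρ' hC d q.1 q.2.1 q.2.2 fun μ hμ hle => congrFun hq ⟨μ, hμ, hle⟩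
  haveI : Module.Finite ℂ (invSpace D d) := Module.Finite.of_injective ev hinj
  have hfr : Module.finrank ℂ (invSpace D d) ≤ Fintype.card S := by
    have := LinearMap.finrank_le_finrank_of_injective hinj
    simpa using this
  let b : S → invSpace D d := fun x => ⟨pl x.1, (hpl x.1 x.2.1).1, by
    have h1 := (hpl x.1 x.2.1).2.1
    have h2 := x.2.2
    omega⟩
  have hb : LinearIndependent ℂ b := LinearIndependent.of_comp (invSpace D d).subtype hLI
  have hspan := hb.span_eq_top_of_card_eq_finrank' (le_antisymm hb.fintype_card_le_finrank hfr)
  have hmem : (⟨p, hp, hpd⟩ : invSpace D d) ∈ Submodule.span ℂ (Set.range b) := by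
    rw [hspan]; trivial
  have h2 := Submodule.mem_map_of_mem (f := (invSpace D d).subtype) hmem
  rw [Submodule.map_span] at h2
  refine Submodule.span_mono ?_ h2
  rintro _ ⟨_, ⟨x, rfl⟩, rfl⟩
  exact ⟨x.1, x.2, rfl⟩

end Knop

end
end

section
/- Pieri-type binomial formula: assume axiom (C0): there exists a regular dominant ρ' ∈ V₀ such that for every λ ∈ Λ₊ there is a unique p ∈ P^W of degree ℓ(λ) with p(ρ'+μ) = δ_{λμ} for all μ ∈ Λ₊ with ℓ(μ) ≤ ℓ(λ). Let ρ ∈ V₀ be regular dominant. Then for every λ ∈ Λ₊ and every k ∈ ℕ the following identity of polynomials in z holds: binom(ℓ(z) − ℓ(ρ+λ), k)·p_λ(z) = Σ_{τ ∈ Λ₊, ℓ(τ−λ) = k} p_λ(ρ+τ)·p_τ(z). -/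
/-
Common framework for F. Knop, "Construction of Commuting Difference Operators
for Multiplicity Free Spaces".

We identify `Γ` with `ι → ℤ` via its basis `Σ` (so `Σ` is the standard basis),
`Γ^∨` with `ι → ℤ` via the dual basis `Σ^∨`, and `V = Hom(Γ, ℂ)` with `ι → ℂ`.
-/

open scoped BigOperators Classical
open MvPolynomial

noncomputable section

namespace Knop

variable {ι : Type*} [Fintype ι] [DecidableEq ι]

section Helpers

lemma pairZ_add' (γ a b : ι → ℤ) : pairZ γ (a + b) = pairZ γ a + pairZ γ b := by
  simp [pairZ, mul_add, Finset.sum_add_distrib]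

lemma pairZ_sub' (γ a b : ι → ℤ) : pairZ γ (a - b) = pairZ γ a - pairZ γ b := by
  simp [pairZ, mul_sub, Finset.sum_sub_distrib]

lemma evalC_add' (γ : ι → ℤ) (a b : ι → ℂ) : evalC γ (a + b) = evalC γ a + evalC γ b := by
  simp [evalC, mul_add, Finset.sum_add_distrib]

lemma evalC_toV (γ η : ι → ℤ) : evalC γ (toV η) = (pairZ γ η : ℂ) := by
  simp [evalC, toV, pairZ]

lemma evalC_actV (γ : ι → ℤ) (w : (ι → ℤ) ≃ₗ[ℤ] (ι → ℤ)) (z : ι → ℂ) :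
    evalC γ (actV w z) = evalC (w.symm γ) z := by
  have h : w.symm γ = ∑ i, γ i • w.symm (e i) := by
    have h2 : γ = ∑ i, γ i • e i := by
      funext j
      simp [e, Finset.sum_apply, Pi.single_apply]
    conv_lhs => rw [h2]
    simp only [map_sum, map_smul]
  rw [h]
  simp only [evalC, actV, Finset.sum_apply, Pi.smul_apply, smul_eq_mul, Int.cast_sum, Int.cast_mul,
    Finset.mul_sum, Finset.sum_mul]
  rw [Finset.sum_comm]
  simp only [mul_assoc]

variable (D : Data ι)

lemma ell_inv (w : (ι → ℤ) ≃ₗ[ℤ] (ι → ℤ)) (hw : w ∈ D.W) (z : ι → ℂ) :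
    evalC D.ell (actV w z) = evalC D.ell z := by
  rw [evalC_actV]
  have h := D.C4 w hw
  have h2 : w.symm D.ell = D.ell := by
    rw [LinearEquiv.symm_apply_eq, h]
  rw [h2]

lemma exists_one [Nonempty ι] : ∃ i, D.ell i = 1 := by
  by_contra! hcon
  have h := D.C8 (fun i => (D.ell i : ℂ)) (fun _ => 0)
    (fun w hw z => ell_inv D w hw z) (by simp) (fun i hi => absurd hi (hcon i))
  obtain ⟨i⟩ := ‹Nonempty ι›
  have h2 := congrFun h i
  have h3 := D.C6 i
  simp at h2
  omega

/-- points of `Λ₊` of length at most `d`. -/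
def lowSet (d : ℤ) : Set (ι → ℤ) := {μ | μ ∈ LamPlus ∧ pairZ D.ell μ ≤ d}

lemma lowSet_finite (d : ℤ) : (lowSet D d).Finite := by
  refine (Set.finite_Icc (0 : ι → ℤ) (fun _ => d)).subset ?_
  rintro μ ⟨h1, h2⟩
  refine ⟨fun i => h1 i, fun i => ?_⟩
  have h3 : D.ell i * μ i ≤ pairZ D.ell μ :=
    Finset.single_le_sum (f := fun i => D.ell i * μ i)
      (fun j _ => mul_nonneg (D.C6 j).le (h1 j)) (Finset.mem_univ i)
  have h4 := D.C6 i
  have h5 := h1 i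
  show μ i ≤ d
  nlinarith

/-- invariant polynomials of degree at most `d`. -/
def lowPoly (d : ℕ) : Submodule ℂ (MvPolynomial ι ℂ) where
  carrier := {p | D.WInv p ∧ p.totalDegree ≤ d}
  zero_mem' := ⟨fun w _ z => by simp, by simp⟩
  add_mem' := by
    rintro a b ⟨ha, ha'⟩ ⟨hb, hb'⟩
    refine ⟨fun w hw z => by simp [ha w hw z, hb w hw z], ?_⟩
    exact (totalDegree_add a b).trans (max_le ha' hb')
  smul_mem' := by
    rintro c a ⟨ha, ha'⟩
    refine ⟨fun w hw z => by simp [ha w hw z], ?_⟩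
    exact (totalDegree_smul_le c a).trans ha'

/-- simultaneous evaluation. -/
def evMap (d : ℕ) (ρ : ι → ℂ) : lowPoly D d →ₗ[ℂ] (lowSet D d → ℂ) :=
  LinearMap.pi fun μ => (aeval (ρ + toV μ.1) : MvPolynomial ι ℂ →ₐ[ℂ] ℂ).toLinearMap ∘ₗ
    (lowPoly D d).subtype

lemma evMap_apply (d : ℕ) (ρ : ι → ℂ) (p : lowPoly D d) (μ : lowSet D d) :
    evMap D d ρ p μ = eval (ρ + toV μ.1) p.1 := by
  simp [evMap, MvPolynomial.aeval_eq_eval]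

lemma evMap_injective (d : ℕ) (hC0 : D.C0) (hd : ∃ lam ∈ LamPlus, pairZ D.ell lam = d) :
    ∃ ρ', Function.Injective (evMap D d ρ') := by
  obtain ⟨ρ', -, -, -, h⟩ := hC0
  refine ⟨ρ', ?_⟩
  rw [← LinearMap.ker_eq_bot, LinearMap.ker_eq_bot']
  intro q hq
  obtain ⟨lam, hl, hld⟩ := hd
  obtain ⟨p, ⟨hp1, hp2, hp3⟩, huniq⟩ := h lam hl
  have hq0 : ∀ μ ∈ LamPlus, pairZ D.ell μ ≤ pairZ D.ell lam → eval (ρ' + toV μ) q.1 = 0 := by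
    intro μ h1 h2
    have := congrFun hq ⟨μ, h1, hld ▸ h2⟩
    rwa [evMap_apply] at this
  obtain ⟨q, hqW, hqd⟩ := q
  simp only at hq0
  rw [hld, Int.toNat_natCast] at hp2
  apply Subtype.ext
  show q = 0
  have key : (p + q).totalDegree = d ∨ (p - q).totalDegree = d := by
    by_contra! hcon
    have a1 : (p + q).totalDegree ≤ d := (totalDegree_add p q).trans (max_le hp2.le hqd)
    have a2 : (p - q).totalDegree ≤ d := (totalDegree_sub p q).trans (max_le hp2.le hqd)
    have e1 : p = (1/2 : ℂ) • ((p + q) + (p - q)) := by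
      rw [show (p + q) + (p - q) = (2:ℂ) • p by rw [two_smul]; ring, smul_smul]; norm_num
    have : p.totalDegree ≤ max (p + q).totalDegree (p - q).totalDegree := by
      conv_lhs => rw [e1]
      exact (totalDegree_smul_le _ _).trans (totalDegree_add _ _)
    have h3 := hcon.1
    have h4 := hcon.2
    rw [hp2] at this
    rcases le_max_iff.1 this with h | h <;> omega
  rcases key with hk | hk
  · have := huniq (p + q) ⟨fun w hw z => by simp [hp1 w hw z, hqW w hw z],
      by rw [hk, hld]; simp, fun μ h1 h2 => by rw [map_add, hq0 μ h1 h2, add_zero, hp3 μ h1 h2]⟩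
    simpa using this
  · have := huniq (p - q) ⟨fun w hw z => by simp [hp1 w hw z, hqW w hw z],
      by rw [hk, hld]; simp, fun μ h1 h2 => by rw [map_sub, hq0 μ h1 h2, sub_zero, hp3 μ h1 h2]⟩
    simpa using this

lemma evMap_surjective (d : ℕ) (ρ : ι → ℂ) (pl : (ι → ℤ) → MvPolynomial ι ℂ)
    (hpl : ∀ lam : ι → ℤ, lam ∈ LamPlus → D.CapelliAt ρ lam (pl lam)) :
    Function.Surjective (evMap D d ρ) := by
  have : Finite (lowSet D d) := (lowSet_finite D d).to_subtype
  have : Fintype (lowSet D d) := Fintype.ofFinite _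
  have hs : ∀ n : ℕ, ∀ μ : lowSet D d, ((d : ℤ) - pairZ D.ell μ.1).toNat = n →
      (Pi.single μ (1:ℂ) : lowSet D d → ℂ) ∈ LinearMap.range (evMap D d ρ) := by
    intro n
    induction n using Nat.strong_induction_on with
    | _ n ih =>
      intro μ hn
      obtain ⟨h1, h2, h3⟩ := hpl μ.1 μ.2.1
      have hμd := μ.2.2
      let p : lowPoly D d := ⟨pl μ.1, h1, by have := h2.trans hμd; exact_mod_cast this⟩
      have hsub : evMap D d ρ p - Pi.single μ 1 ∈ LinearMap.range (evMap D d ρ) := by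
        rw [pi_eq_sum_univ' (evMap D d ρ p - Pi.single μ 1)]
        refine Submodule.sum_mem _ fun ν _ => ?_
        by_cases hν : pairZ D.ell ν.1 ≤ pairZ D.ell μ.1
        · have : (evMap D d ρ p - Pi.single μ 1 : lowSet D d → ℂ) ν = 0 := by
            rw [Pi.sub_apply, evMap_apply, h3 ν.1 ν.2.1 hν, Pi.single_apply]
            simp [Subtype.ext_iff]
          rw [this, zero_smul]
          exact Submodule.zero_mem _
        · refine Submodule.smul_mem _ _ ?_
          have := ih _ (by have := ν.2.2; omega) ν rfl
          convert this using 1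
      have := Submodule.sub_mem _ (LinearMap.mem_range_self (evMap D d ρ) p) hsub
      simpa using this
  intro f
  change f ∈ LinearMap.range (evMap D d ρ)
  rw [pi_eq_sum_univ' f]
  refine Submodule.sum_mem _ fun ν _ => Submodule.smul_mem _ _ ?_
  convert hs _ ν rfl using 1

lemma uniq (d : ℕ) (hC0 : D.C0) (ρ : ι → ℂ) (pl : (ι → ℤ) → MvPolynomial ι ℂ)
    (hpl : ∀ lam : ι → ℤ, lam ∈ LamPlus → D.CapelliAt ρ lam (pl lam))
    (q : MvPolynomial ι ℂ) (hq : D.WInv q) (hqd : q.totalDegree ≤ d)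
    (h0 : ∀ μ ∈ LamPlus, pairZ D.ell μ ≤ d → eval (ρ + toV μ) q = 0) (z : ι → ℂ) :
    eval z q = 0 := by
  rcases isEmpty_or_nonempty ι with hι | hι
  · rw [← h0 0 (fun i => le_rfl) (by simp [pairZ])]
    congr 2
    exact Subsingleton.elim _ _
  obtain ⟨i, hi⟩ := exists_one D
  obtain ⟨ρ', hinj⟩ := evMap_injective D d hC0
    ⟨Pi.single i (d : ℤ), fun j => by by_cases h : j = i <;> simp [Pi.single_apply, h],
      by simp [pairZ, Pi.single_apply, hi]⟩
  have hsurj := evMap_surjective D d ρ pl hpl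
  have : Finite (lowSet D d) := (lowSet_finite D d).to_subtype
  have : Fintype (lowSet D d) := Fintype.ofFinite _
  have : FiniteDimensional ℂ (lowPoly D d) := FiniteDimensional.of_injective _ hinj
  have hle := LinearMap.finrank_le_finrank_of_injective hinj
  have hge := LinearMap.finrank_le_finrank_of_surjective hsurj
  have hinj2 := (LinearMap.injective_iff_surjective_of_finrank_eq_finrank (le_antisymm hle hge)).2 hsurj
  have : (⟨q, hq, hqd⟩ : lowPoly D d) = 0 := by
    apply hinj2
    funext μ
    rw [evMap_apply, map_zero]
    exact h0 μ.1 μ.2.1 μ.2.2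
  have h := congrArg Subtype.val this
  simp only at h
  rw [h]
  simp

end Helpers

/-- formula (ellPieri2): assuming axiom C0, for regular dominant
`ρ ∈ V₀`, `λ ∈ Λ₊` and `k ∈ ℕ`, one has the polynomial identity
`binom(ℓ(z) - ℓ(ρ+λ), k)·p_λ(z) = Σ_{τ ∈ Λ₊, ℓ(τ-λ)=k} p_λ(ρ+τ)·p_τ(z)`. -/
theorem statement9 (D : Data ι) (hC0 : D.C0)
    (ρ : ι → ℂ) (hρ : D.InV0 ρ) (hreg : D.Regular ρ) (hdom : D.Dominant ρ)
    (pl : (ι → ℤ) → MvPolynomial ι ℂ)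
    (hpl : ∀ lam : ι → ℤ, lam ∈ LamPlus → D.CapelliAt ρ lam (pl lam))
    (lam : ι → ℤ) (hlam : lam ∈ LamPlus) (m : ℕ) :
    ∀ z : ι → ℂ,
      ((∏ j ∈ Finset.range m, (evalC D.ell z - evalC D.ell (ρ + toV lam) - (j : ℂ))) /
          (Nat.factorial m : ℂ)) * eval z (pl lam) =
        ∑ᶠ τ ∈ {τ : ι → ℤ | τ ∈ LamPlus ∧ pairZ D.ell (τ - lam) = (m : ℤ)},
          eval (ρ + toV τ) (pl lam) * eval z (pl τ) := by
  intro z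
  have hfin : {τ : ι → ℤ | τ ∈ LamPlus ∧ pairZ D.ell (τ - lam) = (m : ℤ)}.Finite := by
    refine (lowSet_finite D (pairZ D.ell lam + m)).subset ?_
    rintro τ ⟨h1, h2⟩
    rw [pairZ_sub'] at h2
    exact ⟨h1, by omega⟩
  rw [finsum_mem_eq_finite_toFinset_sum _ hfin]
  set T := hfin.toFinset with hT
  have hTm : ∀ τ, τ ∈ T ↔ τ ∈ LamPlus ∧ pairZ D.ell τ = pairZ D.ell lam + m := by
    intro τ
    rw [hT, Set.Finite.mem_toFinset]
    simp only [Set.mem_setOf_eq, pairZ_sub']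
    constructor <;> rintro ⟨a, b⟩ <;> exact ⟨a, by omega⟩
  have hpos : 0 ≤ pairZ D.ell lam :=
    Finset.sum_nonneg fun i _ => mul_nonneg (D.C6 i).le (hlam i)
  obtain ⟨n, hn⟩ := Int.eq_ofNat_of_zero_le hpos
  let L : MvPolynomial ι ℂ := ∑ i, C (D.ell i : ℂ) * X i
  have hL : ∀ z, eval z L = evalC D.ell z := by
    intro z
    simp [L, evalC]
  have hLd : L.totalDegree ≤ 1 := by
    refine totalDegree_finsetSum_le fun i _ => ?_
    refine (totalDegree_mul _ _).trans ?_
    rw [totalDegree_C, totalDegree_X]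
  let A : MvPolynomial ι ℂ := ∏ j ∈ Finset.range m, (L - C (evalC D.ell (ρ + toV lam) + (j : ℂ)))
  have hA : ∀ z, eval z A =
      ∏ j ∈ Finset.range m, (evalC D.ell z - evalC D.ell (ρ + toV lam) - (j : ℂ)) := by
    intro z
    simp only [A, map_prod, map_sub, hL, eval_C, sub_sub]
  have hAd : A.totalDegree ≤ m := by
    refine (totalDegree_finset_prod _ _).trans ?_
    refine (Finset.sum_le_card_nsmul _ _ 1 fun j _ => ?_).trans (by simp)
    refine (totalDegree_sub _ _).trans (max_le hLd ?_)
    rw [totalDegree_C]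
    exact zero_le_one
  let Q : MvPolynomial ι ℂ := ((Nat.factorial m : ℂ)⁻¹) • (A * pl lam) -
    ∑ τ ∈ T, (eval (ρ + toV τ) (pl lam)) • pl τ
  have hQ : ∀ z, eval z Q =
      ((∏ j ∈ Finset.range m, (evalC D.ell z - evalC D.ell (ρ + toV lam) - (j : ℂ))) /
          (Nat.factorial m : ℂ)) * eval z (pl lam) -
        ∑ τ ∈ T, eval (ρ + toV τ) (pl lam) * eval z (pl τ) := by
    intro z
    simp only [Q, map_sub, smul_eval, map_mul, hA, map_sum]
    ring
  obtain ⟨hl1, hl2, hl3⟩ := hpl lam hlam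
  have hfinal := uniq D (n + m) hC0 ρ pl hpl Q ?_ ?_ ?_ z
  · rw [hQ] at hfinal
    exact sub_eq_zero.1 hfinal
  · intro w hw z
    rw [hQ, hQ, ell_inv D w hw, hl1 w hw]
    congr 1
    refine Finset.sum_congr rfl fun τ hτ => ?_
    rw [(hpl τ ((hTm τ).1 hτ).1).1 w hw]
  · refine (totalDegree_sub _ _).trans (max_le ?_ ?_)
    · refine (totalDegree_smul_le _ _).trans ((totalDegree_mul _ _).trans ?_)
      have : (pl lam).totalDegree ≤ n := by
        rw [hn] at hl2; exact_mod_cast hl2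
      omega
    · refine totalDegree_finsetSum_le fun τ hτ => (totalDegree_smul_le _ _).trans ?_
      obtain ⟨h1, h2⟩ := (hTm τ).1 hτ
      have := (hpl τ h1).2.1
      rw [h2, hn] at this
      exact_mod_cast this
  · intro μ hμ hμd
    push_cast at hμd
    rw [hQ]
    have hsum : ∑ τ ∈ T, eval (ρ + toV τ) (pl lam) * eval (ρ + toV μ) (pl τ) =
        if μ ∈ T then eval (ρ + toV μ) (pl lam) else 0 := by
      rw [← Finset.sum_ite_eq T μ (fun τ => eval (ρ + toV τ) (pl lam))]
      refine Finset.sum_congr rfl fun τ hτ => ?_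
      obtain ⟨h1, h2⟩ := (hTm τ).1 hτ
      rw [(hpl τ h1).2.2 μ hμ (by rw [h2, hn]; exact hμd)]
      simp
    rw [hsum]
    have hdiff : evalC D.ell (ρ + toV μ) - evalC D.ell (ρ + toV lam) =
        ((pairZ D.ell μ - pairZ D.ell lam : ℤ) : ℂ) := by
      rw [evalC_add', evalC_add', evalC_toV, evalC_toV]
      push_cast
      ring
    rw [hdiff]
    rcases lt_or_ge (pairZ D.ell μ) (pairZ D.ell lam) with hlt | hge
    · have hne : μ ≠ lam := by rintro rfl; exact lt_irrefl _ hlt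
      have : μ ∉ T := fun h => by have := ((hTm μ).1 h).2; omega
      rw [hl3 μ hμ hlt.le, if_neg hne, if_neg this]
      simp
    · obtain ⟨j, hj⟩ := Int.eq_ofNat_of_zero_le (sub_nonneg.2 hge)
      rw [hj]
      simp only [Int.ofNat_eq_natCast, Int.cast_natCast]
      have hjm : j ≤ m := by
        omega
      rcases hjm.lt_or_eq with hlt | rfl
      · have : μ ∉ T := fun h => by
          have := ((hTm μ).1 h).2
          omega
        rw [if_neg this, Finset.prod_eq_zero (Finset.mem_range.2 hlt) (sub_self _)]
        simp
      · have : μ ∈ T := (hTm μ).2 ⟨hμ, by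
          omega⟩
        rw [if_pos this]
        have hf : ∏ i ∈ Finset.range j, ((j : ℂ) - (i : ℂ)) = (Nat.factorial j : ℂ) := by
          rw [← Nat.descFactorial_self, Nat.descFactorial_eq_prod_range, Nat.cast_prod]
          refine Finset.prod_congr rfl fun i hi => ?_
          rw [Nat.cast_sub (Finset.mem_range.1 hi).le]
        rw [hf, div_self (by exact_mod_cast Nat.factorial_ne_zero j)]
        simp

end Knop

end
end
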